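/- Suppose {1,…,n} = E_1 ∪ E_2 with E_1 ∩ E_2 = ∅ and: (i) there are functions κ_1 on subsets of E_1 and κ_2 on subsets of E_2 with κ(B) = κ_1(B ∩ E_1) + κ_2(B ∩ E_2) for all B ⊆ {1,…,n}; (ii) A_B^{(m)}{}_{k,ℓ} = 0 for all B and m whenever k and ℓ lie in different parts; (iii) for i = 1, 2 there are families (A^i)_{B_i}^{(m_i)} (indexed by subsets B_i ⊆ E_i and steps m_i ≥ 0, depending only on the intersection of B_i with the first m_i elements of E_i in increasing order) such that for all B ⊆ {1,…,n}, all m ≥ 0 and all k, ℓ ∈ E_i one has A_B^{(m)}{}_{k,ℓ} = (A^i)_{B ∩ E_i}^{(m_i)}{}_{k,ℓ} where m_i = |{1,…,m} ∩ E_i|. Then the order-dependent generalized Tutte polynomial factorizes: P(λ_1,…,λ_n) = P_1((λ_k)_{k ∈ E_1}) · P_2((λ_k)_{k ∈ E_2}), where P_i is the polynomial defined by the same construction on the index set E_i (taken in increasing order) from the data A^i, κ_i, ε, ε′, q, α, β. -/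

import Mathlib

open Finset

/-- Product of adjacency factors along a path `ℓ → j₁ → ⋯ → jₚ → k`:
for each consecutive pair `(a, b)` in the list, a factor `A^{(a-1)}_{b,a}`. -/
def pathProd {R : Type*} [CommRing R] (A : ℕ → ℕ → ℕ → R) : List ℕ → R
  | [] => 1
  | [_] => 1
  | a :: b :: rest => A (a - 1) b a * pathProd A (b :: rest)

/-- The quantity `𝒜_{k,ℓ}(Q)` for a subset `Q = {j₁ < ⋯ < jₚ} ⊆ {ℓ+1,…,k−1}`. -/
def calA {R : Type*} [CommRing R] (ε : ℕ → R) (A : ℕ → ℕ → ℕ → R)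
    (k ℓ : ℕ) (Q : Finset ℕ) : R :=
  (ε ℓ * ∏ j ∈ Q, ε j) * pathProd A (ℓ :: ((Q.sort (· ≤ ·)) ++ [k]))

/-- The coefficients `C_{k,ℓ}`: `C_{k,k} = 1` and, for `k > ℓ`,
`C_{k,ℓ} = Σ_{Q ⊆ {ℓ+1,…,k−1}} 𝒜_{k,ℓ}(Q)`. -/
def Cgen {R : Type*} [CommRing R] (ε : ℕ → R) (A : ℕ → ℕ → ℕ → R) (k ℓ : ℕ) : R :=
  if k = ℓ then 1 else ∑ Q ∈ (Finset.Ioo ℓ k).powerset, calA ε A k ℓ Q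

/-- The modified weight `λ̂ₖ = Σ_{ℓ=1}^{k} C_{k,ℓ} λ_ℓ`. -/
def lamHat {R : Type*} [CommRing R] (ε : ℕ → R) (A : ℕ → ℕ → ℕ → R)
    (lam : ℕ → R) (k : ℕ) : R :=
  ∑ ℓ ∈ Finset.Icc 1 k, Cgen ε A k ℓ * lam ℓ

/-- The `B`-dependent ordering parameters: `ε^B_j = ε` if `j ∈ B` and `ε′` otherwise. -/
def epsB {R : Type*} [CommRing R] (ε ε' : R) (B : Finset ℕ) : ℕ → R :=
  fun j => if j ∈ B then ε else ε'

/-- The order-dependent generalized Tutte polynomial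
`P(λ₁,…,λₙ) = Σ_{B ⊆ {1,…,n}} q^{κ(B)} ∏_{j=1}^{n} γ^j_B(λ̂_{j;B}(λ₁,…,λ_j))`,
where `γ^j_B = α` if `j ∈ B` and `β` otherwise, and
`λ̂_{k;B} = Σ_{ℓ=1}^{k} C_{k,ℓ;B} λ_ℓ` is built from the parameters `ε^B` and the
adjacency data `A_B`. -/
def genP {R : Type*} [CommRing R] (ε ε' q : R) (α β : R → R) (n : ℕ)
    (κ : Finset ℕ → ℕ) (A : Finset ℕ → ℕ → ℕ → ℕ → R) (lam : ℕ → R) : R :=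
  ∑ B ∈ (Finset.Icc 1 n).powerset, q ^ κ B *
    ∏ j ∈ Finset.Icc 1 n,
      (if j ∈ B then α else β) (lamHat (epsB ε ε' B) (A B) lam j)

/-- The `j`-th element (1-based) of a finite set of naturals taken in increasing order. -/
def enumF (E : Finset ℕ) (j : ℕ) : ℕ := (E.sort (· ≤ ·)).getD (j - 1) 0

/-- The set of the first `m` elements of `E` in increasing order. -/
def firstElems (E : Finset ℕ) (m : ℕ) : Finset ℕ := ((E.sort (· ≤ ·)).take m).toFinset

/-- The polynomial given by the same construction on the index set `E` taken in
increasing order (relabelled to `{1,…,|E|}` via the increasing enumeration of `E`),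
from the data `Ai, κi, ε, ε′, q, α, β` and the restriction of the weights `λ` to `E`. -/
def restrP {R : Type*} [CommRing R] (ε ε' q : R) (α β : R → R) (E : Finset ℕ)
    (κi : Finset ℕ → ℕ) (Ai : Finset ℕ → ℕ → ℕ → ℕ → R) (lam : ℕ → R) : R :=
  genP ε ε' q α β E.card
    (fun B' => κi (B'.image (enumF E)))
    (fun B' m k ℓ => Ai (B'.image (enumF E)) m (enumF E k) (enumF E ℓ))
    (fun j => lam (enumF E j))

/-!
Splitting an increasing path `ℓ → ⋯ → j → k` at its last step turns the path sums `C_{k,ℓ}` into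
the recursion `λ̂ₖ = λₖ + ∑_{1 ≤ j < k} ε_j A^{(j-1)}_{k,j} λ̂_j`. If no edge enters `E` from
outside, the recursion for `k ∈ E` only involves indices of `E`, so it is the recursion on
`{1,…,|E|}` seen through the increasing enumeration of `E`; in particular `λ̂ₖ` depends on `B`
only through `B ∩ E`. Hence the summand of `B ⊆ E₁ ∪ E₂` is the product of the summands of
`B ∩ E₁` and `B ∩ E₂`.
-/

theorem sort_insert_of_forall_lt {α : Type*} [LinearOrder α] {s : Finset α} {a : α}
    (h : ∀ x ∈ s, x < a) : (insert a s).sort (· ≤ ·) = s.sort (· ≤ ·) ++ [a] := by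
  have hlt : (s.sort (· ≤ ·) ++ [a]).Pairwise (· < ·) :=
    List.pairwise_append.2 ⟨(sortedLT_sort s).pairwise, List.pairwise_singleton _ _, by simpa⟩
  have hset : insert a s = (s.sort (· ≤ ·) ++ [a]).toFinset := by ext; simp
  rw [hset]
  exact (List.toFinset_sort (· ≤ ·) (hlt.imp ne_of_lt)).2 (hlt.imp le_of_lt)

theorem sum_powerset_union_mul {α S : Type*} [DecidableEq α] [NonUnitalNonAssocSemiring S]
    {s t : Finset α} (hst : Disjoint s t) (f g : Finset α → S) :
    ∑ u ∈ (s ∪ t).powerset, f (u ∩ s) * g (u ∩ t) =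
      (∑ v ∈ s.powerset, f v) * ∑ w ∈ t.powerset, g w := by
  rw [sum_mul_sum, ← sum_product']
  refine sum_nbij' (fun u => (u ∩ s, u ∩ t)) (fun p => p.1 ∪ p.2) ?_ ?_ ?_ ?_ fun _ _ => rfl
  · intro u _
    simp
  · intro p hp
    simp only [mem_product, mem_powerset] at hp ⊢
    exact union_subset_union hp.1 hp.2
  · intro u hu
    rw [← inter_union_distrib_left, inter_eq_left.2 (mem_powerset.1 hu)]
  · rintro ⟨v, w⟩ hvw
    simp only [mem_product, mem_powerset] at hvw
    simp [union_inter_distrib_right, inter_eq_left.2 hvw.1, inter_eq_left.2 hvw.2,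
      disjoint_iff_inter_eq_empty.1 (hst.mono_left hvw.1),
      disjoint_iff_inter_eq_empty.1 (hst.symm.mono_left hvw.2)]

theorem sum_powerset_image {α β M : Type*} [DecidableEq β] [AddCommMonoid M] {s : Finset α}
    {g : α → β} (hg : Set.InjOn g s) (f : Finset β → M) :
    ∑ u ∈ (s.image g).powerset, f u = ∑ v ∈ s.powerset, f (v.image g) := by
  rw [powerset_image, sum_image (image_injOn_powerset_of_injOn hg)]

section Enumeration

variable {E : Finset ℕ}

theorem enumF_eq_nth (E : Finset ℕ) (j : ℕ) : enumF E j = Nat.nth (· ∈ E) (j - 1) := by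
  have hfin : (Set.ofPred (· ∈ E)).Finite := E.finite_toSet
  have hE : hfin.toFinset = E := by ext; simp
  rw [enumF, Nat.nth_eq_getD_sort hfin, hE]

theorem sub_one_lt_card_of_mem_Icc {a : ℕ} (ha : a ∈ Icc 1 #E)
    (hfin : (Set.ofPred (· ∈ E)).Finite) : a - 1 < #hfin.toFinset := by
  have hE : hfin.toFinset = E := by ext; simp
  rw [hE]
  grind

theorem enumF_mem {a : ℕ} (ha : a ∈ Icc 1 #E) : enumF E a ∈ E := by
  rw [enumF_eq_nth]
  exact Nat.nth_mem _ (sub_one_lt_card_of_mem_Icc ha)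

theorem strictMonoOn_enumF (E : Finset ℕ) : StrictMonoOn (enumF E) (Icc 1 #E) := by
  intro a ha b hb hab
  rw [enumF_eq_nth, enumF_eq_nth]
  exact Nat.nth_lt_nth' (by grind) (sub_one_lt_card_of_mem_Icc hb)

theorem image_enumF (E : Finset ℕ) : (Icc 1 #E).image (enumF E) = E := by
  refine eq_of_subset_of_card_le (image_subset_iff.2 fun _ ha => enumF_mem ha) ?_
  rw [card_image_of_injOn (strictMonoOn_enumF E).injOn, Nat.card_Icc, Nat.add_sub_cancel]

theorem card_Icc_inter_enumF (hE : ∀ x ∈ E, 1 ≤ x) {a : ℕ} (ha : a ∈ Icc 1 #E) :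
    #(Icc 1 (enumF E a - 1) ∩ E) = a - 1 := by
  have hset : Icc 1 (enumF E a - 1) ∩ E = {x ∈ range (enumF E a) | x ∈ E} := by
    ext x
    have := hE x
    grind
  rw [hset, ← Nat.count_eq_card_filter_range, enumF_eq_nth,
    Nat.count_nth (sub_one_lt_card_of_mem_Icc ha)]

end Enumeration

section Factorization

variable {R : Type*} [CommRing R]

section Recursion

variable (e : ℕ → R) (D : ℕ → ℕ → ℕ → R)

theorem pathProd_append_pair (L : List ℕ) (m k : ℕ) :
    pathProd D (L ++ [m, k]) = D (m - 1) k m * pathProd D (L ++ [m]) := by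
  induction L with
  | nil => rfl
  | cons a L ih =>
    cases L with
    | nil => simp [pathProd, mul_comm]
    | cons b L =>
      simp only [List.cons_append, pathProd] at ih ⊢
      rw [ih, mul_left_comm]

theorem calA_empty (k ℓ : ℕ) : calA e D k ℓ ∅ = e ℓ * D (ℓ - 1) k ℓ := by
  simp [calA, pathProd]

theorem calA_insert {m : ℕ} {Q : Finset ℕ} (hQ : ∀ x ∈ Q, x < m) (k ℓ : ℕ) :
    calA e D k ℓ (insert m Q) = e m * D (m - 1) k m * calA e D m ℓ Q := by
  have hpath : pathProd D (ℓ :: (Q.sort (· ≤ ·) ++ [m, k])) =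
      D (m - 1) k m * pathProd D (ℓ :: (Q.sort (· ≤ ·) ++ [m])) :=
    pathProd_append_pair D (ℓ :: Q.sort (· ≤ ·)) m k
  rw [calA, calA, sort_insert_of_forall_lt hQ, prod_insert fun h => (hQ m h).false,
    List.append_assoc, List.singleton_append, hpath]
  ring

theorem Cgen_self (k : ℕ) : Cgen e D k k = 1 := if_pos rfl

theorem sum_powerset_Ioo_calA {ℓ m : ℕ} (h : ℓ < m) (k : ℕ) :
    ∑ Q ∈ (Ioo ℓ m).powerset, calA e D k ℓ Q =
      ∑ j ∈ Ico ℓ m, e j * D (j - 1) k j * Cgen e D j ℓ := by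
  induction m, Nat.succ_le_of_lt h using Nat.le_induction with
  | base =>
    have hIoo : Ioo ℓ (ℓ + 1) = ∅ := by ext; grind
    simp [hIoo, calA_empty, Cgen_self]
  | succ m hm ih =>
    have hlast : ∑ Q ∈ (Ioo ℓ m).powerset, calA e D k ℓ (insert m Q) =
        e m * D (m - 1) k m * Cgen e D m ℓ := by
      rw [Cgen, if_neg (by lia), mul_sum]
      refine sum_congr rfl fun Q hQ => calA_insert e D (fun x hx => ?_) k ℓ
      exact (mem_Ioo.1 (mem_powerset.1 hQ hx)).2
    have hIoo : Ioo ℓ (m + 1) = insert m (Ioo ℓ m) := by ext; grind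
    rw [hIoo, sum_powerset_insert right_notMem_Ioo, ih hm, hlast, sum_Ico_succ_top (by lia)]

theorem Cgen_of_lt {k ℓ : ℕ} (h : ℓ < k) :
    Cgen e D k ℓ = ∑ j ∈ Ico ℓ k, e j * D (j - 1) k j * Cgen e D j ℓ := by
  rw [Cgen, if_neg h.ne', sum_powerset_Ioo_calA e D h]

theorem lamHat_eq_add_sum (lam : ℕ → R) {k : ℕ} (hk : 1 ≤ k) :
    lamHat e D lam k = lam k + ∑ j ∈ Ico 1 k, e j * D (j - 1) k j * lamHat e D lam j := by
  calc lamHat e D lam k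
      = lam k + ∑ ℓ ∈ Ico 1 k, Cgen e D k ℓ * lam ℓ := by
        rw [lamHat, ← sum_Ico_add_eq_sum_Icc hk, Cgen_self, one_mul, add_comm]
    _ = lam k + ∑ ℓ ∈ Ico 1 k, ∑ j ∈ Ico ℓ k, e j * D (j - 1) k j * (Cgen e D j ℓ * lam ℓ) := by
        congr 1
        refine sum_congr rfl fun ℓ hℓ => ?_
        simp only [Cgen_of_lt e D (mem_Ico.1 hℓ).2, sum_mul, mul_assoc]
    _ = lam k + ∑ j ∈ Ico 1 k, e j * D (j - 1) k j * lamHat e D lam j := by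
        rw [sum_Ico_Ico_comm]
        simp only [lamHat, mul_sum, Ico_add_one_right_eq_Icc]

end Recursion

theorem lamHat_comp_of_strictMonoOn {e e' : ℕ → R} {D D' : ℕ → ℕ → ℕ → R} {f : ℕ → ℕ} {N : ℕ}
    (hf : StrictMonoOn f (Icc 1 N)) (hpos : ∀ a ∈ Icc 1 N, 1 ≤ f a)
    (he : ∀ a ∈ Icc 1 N, e (f a) = e' a)
    (hD : ∀ a ∈ Icc 1 N, ∀ b ∈ Icc 1 N, D (f a - 1) (f b) (f a) = D' (a - 1) b a)
    (hzero : ∀ b ∈ Icc 1 N, ∀ i ∈ Ico 1 (f b), i ∉ (Icc 1 N).image f → D (i - 1) (f b) i = 0)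
    (lam : ℕ → R) {b : ℕ} (hb : b ∈ Icc 1 N) :
    lamHat e D lam (f b) = lamHat e' D' (lam ∘ f) b := by
  induction b using Nat.strong_induction_on with
  | _ b ih =>
    have hlt : ∀ a ∈ Ico 1 b, a ∈ Icc 1 N := by grind
    rw [lamHat_eq_add_sum e D lam (hpos b hb),
      lamHat_eq_add_sum e' D' _ (mem_Icc.1 hb).1, Function.comp_apply]
    congr 1
    symm
    refine sum_of_injOn f (hf.injOn.mono fun a ha => hlt a ha) ?_ ?_ ?_
    · intro a ha
      exact mem_coe.2 (mem_Ico.2 ⟨hpos a (hlt a ha), hf (hlt a ha) hb (mem_Ico.1 ha).2⟩)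
    · intro i hi hi'
      rw [hzero b hb i hi, mul_zero, zero_mul]
      intro hmem
      obtain ⟨a, ha, rfl⟩ := mem_image.1 hmem
      exact hi' ⟨a, mem_coe.2 (mem_Ico.2 ⟨(mem_Icc.1 ha).1,
        (hf.lt_iff_lt ha hb).1 (mem_Ico.1 hi).2⟩), rfl⟩
    · intro a ha
      rw [he a (hlt a ha), hD a (hlt a ha) b hb, ih a (mem_Ico.1 ha).2 (hlt a ha)]

/-- `E` is a block of the adjacency data `A` on `{1,…,n}`: no edge `ℓ → k` enters `E` from
outside, and inside `E` the data is `A'`, step `m` of `A` being step `|{1,…,m} ∩ E|` of `A'`. -/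
structure IsBlock (n : ℕ) (E : Finset ℕ) (A A' : Finset ℕ → ℕ → ℕ → ℕ → R) : Prop where
  subset : E ⊆ Icc 1 n
  eq_zero : ∀ B ⊆ Icc 1 n, ∀ m, ∀ k ∈ E, ∀ ℓ ∈ Icc 1 n \ E, A B m k ℓ = 0
  eq_restrict : ∀ B ⊆ Icc 1 n, ∀ m k ℓ, k ∈ E → ℓ ∈ E →
    A B m k ℓ = A' (B ∩ E) #(Icc 1 m ∩ E) k ℓ

/-- The factor `∏_{j ∈ E} γ^j_B(λ̂_{j;B})` contributed by the indices in `E` to the summand of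
`B` in the order-dependent Tutte polynomial. -/
def partWeight (ε ε' : R) (α β : R → R) (A : Finset ℕ → ℕ → ℕ → ℕ → R) (lam : ℕ → R)
    (E B : Finset ℕ) : R :=
  ∏ j ∈ E, (if j ∈ B then α else β) (lamHat (epsB ε ε' B) (A B) lam j)

theorem partWeight_union (ε ε' : R) (α β : R → R) (A : Finset ℕ → ℕ → ℕ → ℕ → R) (lam : ℕ → R)
    {E F : Finset ℕ} (hEF : Disjoint E F) (B : Finset ℕ) :
    partWeight ε ε' α β A lam (E ∪ F) B =
      partWeight ε ε' α β A lam E B * partWeight ε ε' α β A lam F B :=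
  prod_union hEF

namespace IsBlock

variable {n : ℕ} {E : Finset ℕ} {A A' : Finset ℕ → ℕ → ℕ → ℕ → R}

theorem lamHat_enumF (h : IsBlock n E A A') {B : Finset ℕ} (hB : B ⊆ Icc 1 n) {e e' : ℕ → R}
    (he : ∀ a ∈ Icc 1 #E, e (enumF E a) = e' a) (lam : ℕ → R) {b : ℕ} (hb : b ∈ Icc 1 #E) :
    lamHat e (A B) lam (enumF E b) =
      lamHat e' (fun m k ℓ => A' (B ∩ E) m (enumF E k) (enumF E ℓ)) (lam ∘ enumF E) b := by
  have hpos : ∀ x ∈ E, 1 ≤ x := fun x hx => (mem_Icc.1 (h.subset hx)).1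
  refine lamHat_comp_of_strictMonoOn (strictMonoOn_enumF E) (fun a ha => hpos _ (enumF_mem ha)) he
    (fun a ha b hb => ?_) (fun b hb i hi hiE => ?_) lam hb
  · rw [h.eq_restrict B hB _ _ _ (enumF_mem hb) (enumF_mem ha), card_Icc_inter_enumF hpos ha]
  · rw [image_enumF] at hiE
    have hbn := mem_Icc.1 (h.subset (enumF_mem hb))
    have hib := mem_Ico.1 hi
    exact h.eq_zero B hB _ _ (enumF_mem hb) i (mem_sdiff.2 ⟨mem_Icc.2 (by lia), hiE⟩)

theorem partWeight_eq_prod_Icc (h : IsBlock n E A A') {B C : Finset ℕ} (hB : B ⊆ Icc 1 n)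
    (hC : ∀ a ∈ Icc 1 #E, enumF E a ∈ B ↔ a ∈ C) (ε ε' : R) (α β : R → R) (lam : ℕ → R) :
    partWeight ε ε' α β A lam E B =
      ∏ a ∈ Icc 1 #E, (if a ∈ C then α else β) (lamHat (epsB ε ε' C)
        (fun m k ℓ => A' (B ∩ E) m (enumF E k) (enumF E ℓ)) (lam ∘ enumF E) a) := by
  have he : ∀ a ∈ Icc 1 #E, epsB ε ε' B (enumF E a) = epsB ε ε' C a := fun a ha => by
    simp only [epsB, hC a ha]
  rw [partWeight]
  conv_lhs => rw [← image_enumF E, prod_image (strictMonoOn_enumF E).injOn]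
  refine prod_congr rfl fun a ha => ?_
  rw [h.lamHat_enumF hB he lam ha]
  simp only [hC a ha]

theorem partWeight_inter (h : IsBlock n E A A') {B : Finset ℕ} (hB : B ⊆ Icc 1 n) (ε ε' : R)
    (α β : R → R) (lam : ℕ → R) :
    partWeight ε ε' α β A lam E B = partWeight ε ε' α β A lam E (B ∩ E) := by
  have hlabels : ∀ a ∈ Icc 1 #E, enumF E a ∈ B ↔ a ∈ {a ∈ Icc 1 #E | enumF E a ∈ B} :=
    fun a ha => by rw [mem_filter, and_iff_right ha]
  have hlabels' : ∀ a ∈ Icc 1 #E, enumF E a ∈ B ∩ E ↔ a ∈ {a ∈ Icc 1 #E | enumF E a ∈ B} :=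
    fun a ha => by rw [mem_inter, and_iff_left (enumF_mem ha), hlabels a ha]
  rw [h.partWeight_eq_prod_Icc hB hlabels,
    h.partWeight_eq_prod_Icc (inter_subset_left.trans hB) hlabels', inter_assoc, inter_self]

theorem restrP_eq_sum_powerset (h : IsBlock n E A A') (ε ε' q : R) (α β : R → R)
    (κ : Finset ℕ → ℕ) (lam : ℕ → R) :
    restrP ε ε' q α β E κ A' lam =
      ∑ B ∈ E.powerset, q ^ κ B * partWeight ε ε' α β A lam E B := by
  have hinj := (strictMonoOn_enumF E).injOn
  conv_rhs => enter [1]; rw [← image_enumF E]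
  rw [sum_powerset_image hinj, restrP, genP]
  refine sum_congr rfl fun C hC => ?_
  have hCE : C.image (enumF E) ⊆ E :=
    image_subset_iff.2 fun a ha => enumF_mem (mem_powerset.1 hC ha)
  have hlabels : ∀ a ∈ Icc 1 #E, enumF E a ∈ C.image (enumF E) ↔ a ∈ C := fun a ha => by
    rw [← mem_coe, coe_image, hinj.mem_image_iff (mod_cast mem_powerset.1 hC) ha, mem_coe]
  rw [h.partWeight_eq_prod_Icc (hCE.trans h.subset) hlabels, inter_eq_left.2 hCE]
  rfl

end IsBlock

theorem genP_factorization_general (ε ε' q : R) (α β : R → R) {n : ℕ}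
    {κ κ1 κ2 : Finset ℕ → ℕ} {A A1 A2 : Finset ℕ → ℕ → ℕ → ℕ → R} {E1 E2 : Finset ℕ}
    (hunion : E1 ∪ E2 = Icc 1 n) (hdisj : Disjoint E1 E2)
    (hκ : ∀ B ⊆ Icc 1 n, κ B = κ1 (B ∩ E1) + κ2 (B ∩ E2))
    (hzero : ∀ B ⊆ Icc 1 n, ∀ m k ℓ,
      ((k ∈ E1 ∧ ℓ ∈ E2) ∨ (k ∈ E2 ∧ ℓ ∈ E1)) → A B m k ℓ = 0)
    (hcomp1 : ∀ B ⊆ Icc 1 n, ∀ m k ℓ, k ∈ E1 → ℓ ∈ E1 →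
      A B m k ℓ = A1 (B ∩ E1) #(Icc 1 m ∩ E1) k ℓ)
    (hcomp2 : ∀ B ⊆ Icc 1 n, ∀ m k ℓ, k ∈ E2 → ℓ ∈ E2 →
      A B m k ℓ = A2 (B ∩ E2) #(Icc 1 m ∩ E2) k ℓ)
    (lam : ℕ → R) :
    genP ε ε' q α β n κ A lam =
      restrP ε ε' q α β E1 κ1 A1 lam * restrP ε ε' q α β E2 κ2 A2 lam := by
  have hblock1 : IsBlock n E1 A A1 :=
    ⟨hunion ▸ subset_union_left, fun B hB m k hk ℓ hℓ => hzero B hB m k ℓ (by grind), hcomp1⟩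
  have hblock2 : IsBlock n E2 A A2 :=
    ⟨hunion ▸ subset_union_right, fun B hB m k hk ℓ hℓ => hzero B hB m k ℓ (by grind), hcomp2⟩
  let w := partWeight ε ε' α β A lam
  let f1 := fun B => q ^ κ1 B * w E1 B
  let f2 := fun B => q ^ κ2 B * w E2 B
  have hsplit : ∀ B ⊆ Icc 1 n, q ^ κ B * w (Icc 1 n) B = f1 (B ∩ E1) * f2 (B ∩ E2) := by
    intro B hB
    simp only [f1, f2, w]
    rw [← hunion, partWeight_union _ _ _ _ _ _ hdisj, hκ B hB, pow_add, mul_mul_mul_comm,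
      hblock1.partWeight_inter hB, hblock2.partWeight_inter hB]
  calc genP ε ε' q α β n κ A lam
      = ∑ B ∈ (Icc 1 n).powerset, q ^ κ B * w (Icc 1 n) B := rfl
    _ = ∑ B ∈ (E1 ∪ E2).powerset, f1 (B ∩ E1) * f2 (B ∩ E2) :=
        sum_congr (hunion ▸ rfl) fun B hB => hsplit B (hunion ▸ mem_powerset.1 hB)
    _ = (∑ B ∈ E1.powerset, f1 B) * ∑ B ∈ E2.powerset, f2 B :=
        sum_powerset_union_mul hdisj f1 f2
    _ = restrP ε ε' q α β E1 κ1 A1 lam * restrP ε ε' q α β E2 κ2 A2 lam := by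
        rw [hblock1.restrP_eq_sum_powerset, hblock2.restrP_eq_sum_powerset]

end Factorization

/-- Suppose `{1,…,n} = E₁ ∪ E₂` with `E₁ ∩ E₂ = ∅` and:
(i) `κ(B) = κ₁(B ∩ E₁) + κ₂(B ∩ E₂)`;
(ii) `A_B^{(m)}{}_{k,ℓ} = 0` whenever `k` and `ℓ` lie in different parts;
(iii) for `i = 1, 2` there are families `(Aⁱ)_{B_i}^{(m_i)}`, indexed by subsets
`B_i ⊆ E_i` and steps `m_i ≥ 0` and depending only on the intersection of `B_i` with the
first `m_i` elements of `E_i` in increasing order, such that for all `B ⊆ {1,…,n}`,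
`m ≥ 0` and `k, ℓ ∈ E_i` one has `A_B^{(m)}{}_{k,ℓ} = (Aⁱ)_{B ∩ E_i}^{(m_i)}{}_{k,ℓ}`
where `m_i = |{1,…,m} ∩ E_i|`.
Then `P(λ₁,…,λₙ) = P₁((λ_k)_{k ∈ E₁}) · P₂((λ_k)_{k ∈ E₂})`, where `P_i` is the
polynomial defined by the same construction on the index set `E_i` (in increasing order)
from the data `Aⁱ, κ_i, ε, ε′, q, α, β`. -/
theorem genP_factorization {R : Type*} [CommRing R]
    (ε ε' q : R) (α β : R → R) (n : ℕ) (hn : 1 ≤ n)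
    (κ κ1 κ2 : Finset ℕ → ℕ) (A A1 A2 : Finset ℕ → ℕ → ℕ → ℕ → R)
    (E1 E2 : Finset ℕ)
    (hunion : E1 ∪ E2 = Finset.Icc 1 n) (hdisj : Disjoint E1 E2)
    (hA : ∀ (B B' : Finset ℕ) (m : ℕ),
      B ∩ Finset.Icc 1 m = B' ∩ Finset.Icc 1 m → A B m = A B' m)
    (hκ : ∀ B ⊆ Finset.Icc 1 n, κ B = κ1 (B ∩ E1) + κ2 (B ∩ E2))
    (hzero : ∀ (B : Finset ℕ) (m k ℓ : ℕ),
      ((k ∈ E1 ∧ ℓ ∈ E2) ∨ (k ∈ E2 ∧ ℓ ∈ E1)) → A B m k ℓ = 0)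
    (hA1dep : ∀ (B B' : Finset ℕ) (m : ℕ),
      B ∩ firstElems E1 m = B' ∩ firstElems E1 m → A1 B m = A1 B' m)
    (hA2dep : ∀ (B B' : Finset ℕ) (m : ℕ),
      B ∩ firstElems E2 m = B' ∩ firstElems E2 m → A2 B m = A2 B' m)
    (hcomp1 : ∀ B ⊆ Finset.Icc 1 n, ∀ (m k ℓ : ℕ), k ∈ E1 → ℓ ∈ E1 →
      A B m k ℓ = A1 (B ∩ E1) ((Finset.Icc 1 m ∩ E1).card) k ℓ)
    (hcomp2 : ∀ B ⊆ Finset.Icc 1 n, ∀ (m k ℓ : ℕ), k ∈ E2 → ℓ ∈ E2 →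
      A B m k ℓ = A2 (B ∩ E2) ((Finset.Icc 1 m ∩ E2).card) k ℓ)
    (lam : ℕ → R) :
    genP ε ε' q α β n κ A lam
      = restrP ε ε' q α β E1 κ1 A1 lam * restrP ε ε' q α β E2 κ2 A2 lam :=
  genP_factorization_general ε ε' q α β hunion hdisj hκ (fun B _ => hzero B) hcomp1 hcomp2 lam
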